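/- arXiv:2102.10517 — 2 statements merged into one kernel-verified Lean document; each statement's English description precedes it below -/
import Mathlib

section
/- With p prime, m ≥ 1, q ≥ 1, λ = lcm(p,q), π a permutation of {1,…,m}, c_1,…,c_m, c ∈ Z_λ as in the construction, let 2 ≤ v ≤ m and let γ, δ ∈ {0,…,p−1}^m be digit vectors with γ_{π(j)} = δ_{π(j)} for all 1 ≤ j < v and γ_{π(v)} ≠ δ_{π(v)}. For k ∈ {1,…,p−1}, let γ^k (respectively δ^k) be obtained from γ (respectively δ) by replacing the entry at position π(v−1) with γ_{π(v−1)} − k mod p (respectively δ_{π(v−1)} − k mod p). Then for every α, t, t' ∈ {0,…,p−1}: ω_λ^{a_t^α(γ) − a_{t'}^α(δ)} + Σ_{k=1}^{p−1} ω_λ^{a_t^α(γ^k) − a_{t'}^α(δ^k)} = 0. -/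
open Finset

/-- `ω_λ = exp(2π√(-1)/λ)`. -/
noncomputable def omg (lam : ℕ) : ℂ := Complex.exp (2 * Real.pi * Complex.I / lam)

/-- Aperiodic cross-correlation of two length-`L` complex sequences at shift `u`. -/
noncomputable def aCorr (L : ℕ) (a b : ℕ → ℂ) (u : ℤ) : ℂ :=
  if 0 ≤ u then
    ∑ i ∈ Finset.range (L - u.toNat), a (i + u.toNat) * (starRingEnd ℂ) (b i)
  else
    ∑ i ∈ Finset.range (L - (-u).toNat), a i * (starRingEnd ℂ) (b (i + (-u).toNat))

/-- Cross-correlation sum of two `M × L` codes (matrices given row-wise). -/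
noncomputable def codeCorr (M L : ℕ) (C D : ℕ → ℕ → ℂ) (u : ℤ) : ℂ :=
  ∑ ν ∈ Finset.range M, aCorr L (C ν) (D ν) u

/-- Base-`p` digit vector of `γ` (digit `j` is `γ / p^j % p`). -/
def dig (p m γ : ℕ) : Fin m → ℕ := fun j => γ / p ^ (j : ℕ) % p

/-- The quadratic multivariable function
`f(v) = (λ/p)·Σ_{β=1}^{m-1} v_{π(β)} v_{π(β+1)} + Σ_{β=1}^{m} c_β v_β` (as an integer). -/
def fQuad (p m lam : ℕ) (π : Equiv.Perm (Fin m)) (cf : Fin m → ZMod lam)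
    (v : Fin m → ℕ) : ℤ :=
  ((lam / p : ℕ) : ℤ) * ∑ β : Fin (m - 1),
      (v (π (Fin.castLE (Nat.sub_le m 1) β)) : ℤ) *
        (v (π ⟨(β : ℕ) + 1, by have := β.isLt; omega⟩) : ℤ)
    + ∑ β : Fin m, ((cf β).val : ℤ) * (v β : ℤ)

/-- `a_t^α(v) = f(v) + (λ/p)·α·v_{π(1)} + (λ/p)·t·v_{π(m)} + c` (as an integer). -/
def aFun (p m lam : ℕ) (hm : 0 < m) (π : Equiv.Perm (Fin m)) (cf : Fin m → ZMod lam)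
    (c : ZMod lam) (t α : ℕ) (v : Fin m → ℕ) : ℤ :=
  fQuad p m lam π cf v
    + ((lam / p : ℕ) : ℤ) * (α : ℤ) * (v (π ⟨0, hm⟩) : ℤ)
    + ((lam / p : ℕ) : ℤ) * (t : ℤ) * (v (π ⟨m - 1, by omega⟩) : ℤ)
    + ((c.val : ℕ) : ℤ)

/-- The code `C_t^p`: the `p × p^m` matrix whose `α`-th row is `ψ(a_t^α)`. -/
noncomputable def codeC (p m lam : ℕ) (hm : 0 < m) (π : Equiv.Perm (Fin m))
    (cf : Fin m → ZMod lam) (c : ZMod lam) (t : ℕ) : ℕ → ℕ → ℂ :=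
  fun α γ => omg lam ^ (aFun p m lam hm π cf c t α (dig p m γ))

/-- Replacing a common digit of `γ` and `δ` at position `π n` by `x` changes the difference of
the phases by a term linear in `x`, whose slope is the difference of the digits at `π (n + 1)`. -/
theorem aFun_update_sub_aFun_update (p m lam : ℕ) (hm : 0 < m) (π : Equiv.Perm (Fin m))
    (cf : Fin m → ZMod lam) (c : ZMod lam) (t t' α n : ℕ) (hn : n + 1 < m) (γ δ : Fin m → ℕ)
    (heq : ∀ j : Fin m, (j : ℕ) < n → γ (π j) = δ (π j)) (x : ℕ) :
    aFun p m lam hm π cf c t α (Function.update γ (π ⟨n, by omega⟩) x)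
        - aFun p m lam hm π cf c t' α (Function.update δ (π ⟨n, by omega⟩) x)
      = aFun p m lam hm π cf c t α (Function.update γ (π ⟨n, by omega⟩) 0)
        - aFun p m lam hm π cf c t' α (Function.update δ (π ⟨n, by omega⟩) 0)
        + ((lam / p : ℕ) : ℤ) * ((γ (π ⟨n + 1, hn⟩) : ℤ) - δ (π ⟨n + 1, hn⟩)) * x := by
  have upd : ∀ (w : Fin m → ℕ) (y : ℕ) (j : Fin m),
      Function.update w (π ⟨n, by omega⟩) y (π j) = if (j : ℕ) = n then y else w (π j) := by
    intro w y j
    simp [Function.update_apply, Fin.ext_iff]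
  have quad : ∀ y : ℕ, (∑ β : Fin (m - 1),
        ((Function.update γ (π ⟨n, by omega⟩) y (π (Fin.castLE (Nat.sub_le m 1) β)) : ℤ) *
          (Function.update γ (π ⟨n, by omega⟩) y
            (π ⟨(β : ℕ) + 1, by have := β.isLt; omega⟩) : ℤ)))
      - ∑ β : Fin (m - 1),
        ((Function.update δ (π ⟨n, by omega⟩) y (π (Fin.castLE (Nat.sub_le m 1) β)) : ℤ) *
          (Function.update δ (π ⟨n, by omega⟩) y
            (π ⟨(β : ℕ) + 1, by have := β.isLt; omega⟩) : ℤ))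
      = (∑ β : Fin (m - 1), if (β : ℕ) = n ∨ (β : ℕ) + 1 = n then (0 : ℤ) else
          (γ (π (Fin.castLE (Nat.sub_le m 1) β)) : ℤ) *
            (γ (π ⟨(β : ℕ) + 1, by have := β.isLt; omega⟩) : ℤ)
          - (δ (π (Fin.castLE (Nat.sub_le m 1) β)) : ℤ) *
            (δ (π ⟨(β : ℕ) + 1, by have := β.isLt; omega⟩) : ℤ))
        + ((γ (π ⟨n + 1, hn⟩) : ℤ) - δ (π ⟨n + 1, hn⟩)) * y := by
    intro y
    have slope : ((γ (π ⟨n + 1, hn⟩) : ℤ) - δ (π ⟨n + 1, hn⟩)) * y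
        = ∑ β : Fin (m - 1), if β = ⟨n, by omega⟩ then
          ((γ (π ⟨n + 1, hn⟩) : ℤ) - δ (π ⟨n + 1, hn⟩)) * y else 0 := by simp
    rw [slope, ← Finset.sum_sub_distrib, ← Finset.sum_add_distrib]
    refine Finset.sum_congr rfl fun β _ => ?_
    simp only [upd, Fin.val_castLE, Fin.ext_iff]
    by_cases h₁ : (β : ℕ) = n
    · simp only [h₁, if_true, true_or, Nat.succ_ne_self, if_false]
      ring
    by_cases h₂ : (β : ℕ) + 1 = n
    · have := heq (Fin.castLE (Nat.sub_le m 1) β) (by simp; omega)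
      simp [h₁, h₂, this]
    · simp [h₁, h₂]
  have lin : ∀ y : ℕ,
      (∑ β : Fin m, ((cf β).val : ℤ) * (Function.update γ (π ⟨n, by omega⟩) y β : ℤ))
      - ∑ β : Fin m, ((cf β).val : ℤ) * (Function.update δ (π ⟨n, by omega⟩) y β : ℤ)
      = ∑ β : Fin m, if β = π ⟨n, by omega⟩ then (0 : ℤ) else
        ((cf β).val : ℤ) * (γ β : ℤ) - ((cf β).val : ℤ) * (δ β : ℤ) := by
    intro y
    rw [← Finset.sum_sub_distrib]
    refine Finset.sum_congr rfl fun β _ => ?_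
    by_cases h : β = π ⟨n, by omega⟩ <;> simp [h]
  have first : ∀ y : ℕ, (Function.update γ (π ⟨n, by omega⟩) y (π ⟨0, hm⟩) : ℤ)
      - (Function.update δ (π ⟨n, by omega⟩) y (π ⟨0, hm⟩) : ℤ) = 0 := by
    intro y
    rw [upd, upd]
    by_cases h : 0 = n
    · simp [h]
    · simp [h, heq ⟨0, hm⟩ (Nat.pos_of_ne_zero (Ne.symm h))]
  have last : ∀ (w : Fin m → ℕ) (y : ℕ),
      Function.update w (π ⟨n, by omega⟩) y (π ⟨m - 1, by omega⟩) = w (π ⟨m - 1, by omega⟩) := by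
    intro w y
    rw [upd, if_neg (by simp only; omega)]
  have quad_x := quad x
  have quad_zero := quad 0
  have lin_x := lin x
  have lin_zero := lin 0
  have first_x := first x
  have first_zero := first 0
  simp only [aFun, fQuad, last]
  rw [Nat.cast_zero] at quad_zero
  linear_combination ((lam / p : ℕ) : ℤ) * (quad_x - quad_zero) + lin_x - lin_zero
    + ((lam / p : ℕ) : ℤ) * α * (first_x - first_zero)

/-- A nontrivial `p`-th root of unity summed over a reversed, cyclically shifted residue system. -/
theorem sum_pow_add_sub_mod_eq_zero {K : Type*} [Field K] {ζ : K} {p : ℕ}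
    (hζp : ζ ^ p = 1) (hζ : ζ ≠ 1) (g : ℕ) :
    ∑ k ∈ Finset.range p, ζ ^ ((g + (p - k)) % p) = 0 := by
  have hmod (n : ℕ) : ζ ^ (n % p) = ζ ^ n := (pow_eq_pow_mod n hζp).symm
  have geom : ∑ k ∈ Finset.range p, ζ ^ k = 0 := by
    rw [geom_sum_eq hζ, hζp, sub_self, zero_div]
  calc ∑ k ∈ Finset.range p, ζ ^ ((g + (p - k)) % p)
      = ∑ k ∈ Finset.range p, ζ ^ (g + 1) * ζ ^ (p - 1 - k) := by
        refine Finset.sum_congr rfl fun k hk => ?_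
        have := Finset.mem_range.mp hk
        rw [hmod, ← pow_add]
        congr 1
        omega
    _ = 0 := by
        rw [← Finset.mul_sum, Finset.sum_range_reflect (fun k => ζ ^ k), geom, mul_zero]

theorem isPrimitiveRoot_omg {lam : ℕ} (h : lam ≠ 0) : IsPrimitiveRoot (omg lam) lam :=
  Complex.isPrimitiveRoot_exp lam h

/-- with `γ, δ` agreeing at positions `π(1),…,π(v-1)` but differing at
`π(v)`, the term at `(γ,δ)` plus the terms at the shifted pairs `(γ^k,δ^k)`,
`k = 1,…,p-1`, sum to zero. -/
theorem statement5 (p : ℕ) (hp : p.Prime) (m : ℕ) (hm : 0 < m) (q : ℕ) (hq : 0 < q)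
    (π : Equiv.Perm (Fin m)) (cf : Fin m → ZMod (Nat.lcm p q)) (c : ZMod (Nat.lcm p q))
    (v : ℕ) (hv2 : 2 ≤ v) (hvm : v ≤ m)
    (γ δ : Fin m → ℕ) (hγ : ∀ j, γ j < p) (hδ : ∀ j, δ j < p)
    (heq : ∀ j : Fin m, (j : ℕ) < v - 1 → γ (π j) = δ (π j))
    (hne : γ (π ⟨v - 1, by omega⟩) ≠ δ (π ⟨v - 1, by omega⟩))
    (α t t' : ℕ) (hα : α < p) (ht : t < p) (ht' : t' < p) :
    omg (Nat.lcm p q) ^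
        (aFun p m (Nat.lcm p q) hm π cf c t α γ
          - aFun p m (Nat.lcm p q) hm π cf c t' α δ)
      + ∑ k ∈ Finset.Icc 1 (p - 1),
          omg (Nat.lcm p q) ^
            (aFun p m (Nat.lcm p q) hm π cf c t α
                (Function.update γ (π ⟨v - 2, by omega⟩)
                  ((γ (π ⟨v - 2, by omega⟩) + (p - k)) % p))
              - aFun p m (Nat.lcm p q) hm π cf c t' α
                (Function.update δ (π ⟨v - 2, by omega⟩)
                  ((δ (π ⟨v - 2, by omega⟩) + (p - k)) % p))) = 0 := by
  obtain ⟨n, rfl⟩ : ∃ n, v = n + 2 := ⟨v - 2, by omega⟩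
  simp only [Nat.add_sub_cancel] at *
  have hn : n + 1 < m := by omega
  have hlam0 : Nat.lcm p q ≠ 0 := Nat.lcm_ne_zero hp.ne_zero hq.ne'
  have hdvd : p ∣ Nat.lcm p q := Nat.dvd_lcm_left p q
  generalize Nat.lcm p q = lam at *
  set d : ℤ := (γ (π ⟨n + 1, hn⟩) : ℤ) - δ (π ⟨n + 1, hn⟩)
  have hprim := isPrimitiveRoot_omg hlam0
  have hω : omg lam ≠ 0 := hprim.ne_zero hlam0
  have hmul : ((lam / p : ℕ) : ℤ) * p = lam := by
    exact_mod_cast Nat.div_mul_cancel hdvd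
  have hquot : ((lam / p : ℕ) : ℤ) ≠ 0 := by
    intro h
    rw [h, zero_mul] at hmul
    exact hlam0 (by exact_mod_cast hmul.symm)
  set ζ : ℂ := omg lam ^ (((lam / p : ℕ) : ℤ) * d) with hζdef
  have hζp : ζ ^ p = 1 := by
    rw [hζdef, ← zpow_natCast, ← zpow_mul, hprim.zpow_eq_one_iff_dvd]
    exact ⟨d, by rw [← hmul]; ring⟩
  have hζ : ζ ≠ 1 := by
    rw [hζdef, Ne, hprim.zpow_eq_one_iff_dvd, ← hmul, mul_dvd_mul_iff_left hquot]
    intro h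
    have h₁ := hγ (π ⟨n + 1, hn⟩)
    have h₂ := hδ (π ⟨n + 1, hn⟩)
    have : d = 0 := Int.eq_zero_of_abs_lt_dvd h (by rw [abs_lt]; omega)
    exact hne (by exact_mod_cast sub_eq_zero.mp this)
  have hg : γ (π ⟨n, by omega⟩) = δ (π ⟨n, by omega⟩) := heq _ (by simp)
  obtain ⟨e, term⟩ : ∃ e : ℤ, ∀ x : ℕ,
      aFun p m lam hm π cf c t α (Function.update γ (π ⟨n, by omega⟩) x)
        - aFun p m lam hm π cf c t' α (Function.update δ (π ⟨n, by omega⟩) x)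
      = e + ((lam / p : ℕ) : ℤ) * d * x :=
    ⟨_, aFun_update_sub_aFun_update p m lam hm π cf c t t' α n hn γ δ
      (fun j hj => heq j (by omega))⟩
  have hsum := sum_pow_add_sub_mod_eq_zero hζp hζ (δ (π ⟨n, by omega⟩))
  have head := term (γ (π ⟨n, by omega⟩))
  nth_rw 2 [hg] at head
  rw [Function.update_eq_self, Function.update_eq_self] at head
  have hpow (x : ℕ) :
      omg lam ^ (e + ((lam / p : ℕ) : ℤ) * d * x) = omg lam ^ e * ζ ^ x := by
    rw [zpow_add₀ hω, zpow_mul, zpow_natCast]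
  rw [head, hg]
  simp only [term, hpow]
  rw [← Finset.mul_sum, ← mul_add]
  rw [Finset.range_eq_Ico, Finset.sum_eq_sum_Ico_succ_bot hp.pos] at hsum
  have hIcc : Finset.Icc 1 (p - 1) = Finset.Ico (0 + 1) p := by
    ext k
    have := hp.pos
    simp only [Finset.mem_Icc, Finset.mem_Ico]
    omega
  rw [Nat.sub_zero, Nat.add_mod_right, Nat.mod_eq_of_lt (hδ _)] at hsum
  rw [hIcc, hsum, mul_zero]
end

section
/- Let k ≥ 1, let p_1,…,p_k be primes, m_1,…,m_k ≥ 1 integers, and q ≥ 1 an integer with p_i | q for every i (so λ = lcm(p_1,…,p_k,q) = q). Set K = ∏_{i=1}^k p_i and L = ∏_{i=1}^k p_i^{m_i}. Then the family S = {C_{(t_1,…,t_k)} : t_i ∈ {0,…,p_i−1} for i = 1,…,k} of K codes, each a K × L complex matrix, forms a (K, K, L)-CCC: for all index tuples t = (t_1,…,t_k), t' = (t_1',…,t_k') and all integers u with |u| < L, C(C_t, C_{t'})(u) = KL if u = 0 and t = t', C(C_t, C_{t'})(u) = 0 if 0 < |u| < L and t = t', and C(C_t, C_{t'})(u) = 0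 for all |u| < L if t ≠ t'. -/
open Finset

/-- For a lexicographic enumeration (block `0` slowest, block `k-1` fastest) of tuples
with block `j` ranging over `{0,…,Lf j - 1}`, `blockIdx k Lf n j` is the `j`-th
component of the tuple at overall position `n`. -/
def blockIdx (k : ℕ) (Lf : Fin k → ℕ) (n : ℕ) (j : Fin k) : ℕ :=
  n / (∏ l ∈ Finset.univ.filter (fun l => j < l), Lf l) % Lf j

/-- The code `C_{(t_1,…,t_k)}`: the `(∏ p_i) × (∏ p_i^{m_i})` matrix whose row indexed
(lexicographically) by `(α_1,…,α_k)` is `ψ(a_{t_1}^{α_1} + … + a_{t_k}^{α_k})`. -/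
noncomputable def bigCode (k : ℕ) (p m : Fin k → ℕ) (hm : ∀ i, 0 < m i) (q : ℕ)
    (π : ∀ i, Equiv.Perm (Fin (m i))) (cf : ∀ i, Fin (m i) → ZMod q)
    (t : Fin k → ℕ) : ℕ → ℕ → ℂ :=
  fun r n => omg q ^ (∑ i, aFun (p i) (m i) q (hm i) (π i) (cf i) 0 (t i)
      (blockIdx k p r i)
      (dig (p i) (m i) (blockIdx k (fun j => p j ^ m j) n i)))

theorem sum_addChar_mul_sub {p : ℕ} [Fact p.Prime] {A : Type*} [AddCommGroup A] [Module ℂ A]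
    {χ : AddChar (ZMod p) ℂ} (hχ : χ.IsPrimitive) (F : ZMod p → ZMod p → A) :
    ∑ α : ZMod p, ∑ x : ZMod p, ∑ y : ZMod p, χ (α * (x - y)) • F x y =
      (p : ℂ) • ∑ z, F z z := by
  rw [sum_comm, smul_sum]
  refine sum_congr rfl fun x _ => ?_
  rw [sum_comm]
  simp_rw [← sum_smul, AddChar.sum_mulShift _ hχ, sub_eq_zero]
  simp

/-- The exponent of a path: consecutive products plus a linear term at the last vertex. -/
def pathPhase {p : ℕ} (n : ℕ) (t : ZMod p) (x : Fin (n + 1) → ZMod p) : ZMod p :=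
  ∑ j : Fin n, x j.castSucc * x j.succ + t * x (Fin.last n)

theorem pathPhase_cons {p : ℕ} (n : ℕ) (t z : ZMod p) (x : Fin (n + 1) → ZMod p) :
    pathPhase (n + 1) t (Fin.cons z x : Fin (n + 2) → ZMod p) = z * x 0 + pathPhase n t x := by
  simp [pathPhase, Fin.sum_univ_succ, add_assoc, ← Fin.succ_last]

theorem sum_fin_succ_arrow {p n : ℕ} [NeZero p] {A : Type*} [AddCommMonoid A]
    (F : (Fin (n + 1) → ZMod p) → A) :
    ∑ x, F x = ∑ z : ZMod p, ∑ x : Fin n → ZMod p, F (Fin.cons z x) := by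
  rw [← Fintype.sum_prod_type', ← (Fin.consEquiv fun _ : Fin (n + 1) => ZMod p).sum_comp]
  rfl

theorem sum_pathPhase_pairs {p : ℕ} [Fact p.Prime] {A : Type*} [AddCommGroup A] [Module ℂ A]
    {χ : AddChar (ZMod p) ℂ} (hχ : χ.IsPrimitive) (n : ℕ) (h : Fin (n + 1) → ZMod p → ℂ)
    (hh : ∀ j z, h j z * (starRingEnd ℂ) (h j z) = 1) (w : Fin (n + 1) → ZMod p → ℤ)
    (g : ℤ → A) (t t' : ZMod p) :
    ∑ α : ZMod p, ∑ x : Fin (n + 1) → ZMod p, ∑ y : Fin (n + 1) → ZMod p,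
      (χ (α * (x 0 - y 0) + (pathPhase n t x - pathPhase n t' y)) *
        ∏ j, (h j (x j) * (starRingEnd ℂ) (h j (y j)))) • g (∑ j, (w j (x j) - w j (y j))) =
      if t = t' then (p : ℂ) ^ (n + 2) • g 0 else 0 := by
  have peel (n : ℕ) (h : Fin (n + 1) → ZMod p → ℂ) (w : Fin (n + 1) → ZMod p → ℤ) :
      ∑ α : ZMod p, ∑ x : Fin (n + 1) → ZMod p, ∑ y : Fin (n + 1) → ZMod p,
        (χ (α * (x 0 - y 0) + (pathPhase n t x - pathPhase n t' y)) *
          ∏ j, (h j (x j) * (starRingEnd ℂ) (h j (y j)))) • g (∑ j, (w j (x j) - w j (y j))) =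
      (p : ℂ) • ∑ z : ZMod p, ∑ x : Fin n → ZMod p, ∑ y : Fin n → ZMod p,
        (χ (pathPhase n t (Fin.cons z x : Fin (n + 1) → ZMod p) -
            pathPhase n t' (Fin.cons z y : Fin (n + 1) → ZMod p)) *
          ((h 0 z * (starRingEnd ℂ) (h 0 z)) *
            ∏ j : Fin n, (h j.succ (x j) * (starRingEnd ℂ) (h j.succ (y j))))) •
          g (∑ j : Fin n, (w j.succ (x j) - w j.succ (y j))) := by
    have key := sum_addChar_mul_sub hχ fun a b =>
      ∑ x : Fin n → ZMod p, ∑ y : Fin n → ZMod p,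
        (χ (pathPhase n t (Fin.cons a x : Fin (n + 1) → ZMod p) -
            pathPhase n t' (Fin.cons b y : Fin (n + 1) → ZMod p)) *
          ((h 0 a * (starRingEnd ℂ) (h 0 b)) *
            ∏ j : Fin n, (h j.succ (x j) * (starRingEnd ℂ) (h j.succ (y j))))) •
          g ((w 0 a - w 0 b) + ∑ j : Fin n, (w j.succ (x j) - w j.succ (y j)))
    simp only [sub_self, zero_add] at key
    rw [← key]
    refine sum_congr rfl fun α _ => ?_
    rw [sum_fin_succ_arrow]
    refine sum_congr rfl fun a _ => ?_
    simp_rw [sum_fin_succ_arrow (n := n)]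
    rw [sum_comm]
    refine sum_congr rfl fun b _ => ?_
    simp_rw [smul_sum]
    refine sum_congr rfl fun x _ => sum_congr rfl fun y _ => ?_
    simp only [Fin.prod_univ_succ, Fin.sum_univ_succ, Fin.cons_zero, Fin.cons_succ, smul_smul,
      AddChar.map_add_eq_mul, mul_assoc]
  induction n with
  | zero =>
    rw [peel]
    have (z : ZMod p) : t * z - t' * z = z * (t - t') := by ring
    simp only [hh, pathPhase, this, univ_eq_empty, sum_empty, prod_empty, zero_add,
      Fin.last_zero, Fin.cons_zero, sum_const, card_univ, Fintype.card_unique, one_smul, mul_one,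
      ← sum_smul, AddChar.sum_mulShift _ hχ, sub_eq_zero, ZMod.card]
    split_ifs with h1
    · simp [smul_smul, pow_two]
    · simp
  | succ n ih =>
    rw [peel]
    have ih' := ih (fun j => h j.succ) (fun j => hh j.succ) (fun j => w j.succ)
    have (z : ZMod p) (x y : Fin (n + 1) → ZMod p) :
        z * x 0 + pathPhase n t x - (z * y 0 + pathPhase n t' y) =
          z * (x 0 - y 0) + (pathPhase n t x - pathPhase n t' y) := by ring
    simp only [hh, pathPhase_cons, one_mul, this]
    rw [ih']
    split_ifs
    · rw [smul_smul, ← pow_succ']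
    · simp

theorem sum_blockIdx (k : ℕ) (Lf : Fin k → ℕ) (n : ℕ) :
    ∑ j, blockIdx k Lf n j * ∏ l ∈ univ.filter (fun l => j < l), Lf l = n % ∏ j, Lf j := by
  induction k with
  | zero => simp [Nat.mod_one]
  | succ k ih =>
    have h0 : ∏ l ∈ univ.filter (fun l : Fin (k + 1) => 0 < l), Lf l = ∏ j : Fin k, Lf j.succ := by
      simp [prod_filter, Fin.prod_univ_succ]
    have hs (j : Fin k) : ∏ l ∈ univ.filter (fun l : Fin (k + 1) => j.succ < l), Lf l =
        ∏ l ∈ univ.filter (fun l : Fin k => j < l), Lf l.succ := by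
      simp [prod_filter, Fin.prod_univ_succ]
    have := ih fun j => Lf j.succ
    simp only [blockIdx] at this ⊢
    rw [Fin.sum_univ_succ, Fin.prod_univ_succ, h0, mul_comm (Lf 0), Nat.mod_mul, ← this, add_comm]
    simp only [hs, mul_comm]

theorem sum_range_blockIdx {A : Type*} [AddCommMonoid A] (k : ℕ) (Lf : Fin k → ℕ)
    (hL : ∀ j, 0 < Lf j) (F : (Fin k → ℕ) → A) :
    ∑ n ∈ range (∏ j, Lf j), F (blockIdx k Lf n) =
      ∑ x ∈ Fintype.piFinset fun j => range (Lf j), F x := by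
  have hm : Set.MapsTo (blockIdx k Lf) (range (∏ j, Lf j))
      (Fintype.piFinset fun j => range (Lf j)) := fun n _ => by
    simpa [blockIdx] using fun j => Nat.mod_lt _ (hL j)
  have hi : Set.InjOn (blockIdx k Lf) (range (∏ j, Lf j)) := fun a ha b hb hab => by
    have h1 := sum_blockIdx k Lf a
    rwa [hab, sum_blockIdx, Nat.mod_eq_of_lt (mem_range.1 hb),
      Nat.mod_eq_of_lt (mem_range.1 ha), eq_comm] at h1
  exact sum_nbij _ hm hi (surjOn_of_injOn_of_card_le _ hm hi (by simp)) fun _ _ => rfl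

theorem sum_range_pow_dig {A : Type*} [AddCommMonoid A] (p m : ℕ) [NeZero p]
    (F : (Fin m → ℕ) → ℕ → A) :
    ∑ n ∈ range (p ^ m), F (dig p m n) n =
      ∑ v : Fin m → ZMod p, F (fun j => (v j).val) (∑ j, (v j).val * p ^ (j : ℕ)) := by
  obtain ⟨p, rfl⟩ := Nat.exists_eq_succ_of_ne_zero (NeZero.ne p)
  rw [sum_range, ← finFunctionFinEquiv.sum_comp]
  refine sum_congr rfl fun v _ => ?_
  congr 1
  funext j
  exact congrArg Fin.val (congrFun (finFunctionFinEquiv.symm_apply_apply v) j)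

theorem sum_range_zmod_val {A : Type*} [AddCommMonoid A] (p : ℕ) [NeZero p] (F : ℕ → A) :
    ∑ n ∈ range p, F n = ∑ z : ZMod p, F z.val := by
  obtain ⟨p, rfl⟩ := Nat.exists_eq_succ_of_ne_zero (NeZero.ne p)
  exact sum_range _

theorem aCorr_eq (L : ℕ) (a b : ℕ → ℂ) (u : ℤ) :
    aCorr L a b u = ∑ x ∈ range L, ∑ y ∈ range L,
      if (x : ℤ) - y = u then a x * (starRingEnd ℂ) (b y) else 0 := by
  unfold aCorr
  split_ifs with hu
  · rw [sum_comm]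
    have hs : range (L - u.toNat) ⊆ range L := by grind
    refine Eq.trans (sum_congr rfl fun y hy => ?_) (sum_subset hs fun y hy hy' => ?_)
    · rw [sum_eq_single (y + u.toNat), if_pos (by omega)]
      · intro x _ hx
        rw [if_neg (by omega)]
      · grind
    · exact sum_eq_zero fun x hx => if_neg (by grind)
  · have hs : range (L - (-u).toNat) ⊆ range L := by grind
    refine Eq.trans (sum_congr rfl fun x hx => ?_) (sum_subset hs fun x hx hx' => ?_)
    · rw [sum_eq_single (x + (-u).toNat), if_pos (by omega)]
      · intro y _ hy
        rw [if_neg (by omega)]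
      · grind
    · exact sum_eq_zero fun y hy => if_neg (by grind)

theorem isPrimitiveRoot_omg_pow {p q : ℕ} (hq : 0 < q) (hd : p ∣ q) :
    IsPrimitiveRoot (omg q ^ (q / p)) p :=
  (Complex.isPrimitiveRoot_exp q hq.ne').pow hq (Nat.div_mul_cancel hd).symm

theorem norm_omg {q : ℕ} (hq : 0 < q) : ‖omg q‖ = 1 :=
  (Complex.isPrimitiveRoot_exp q hq.ne').norm'_eq_one hq.ne'

theorem omg_zpow_aFun {p n q : ℕ} [NeZero p] (hη : (omg q ^ (q / p)) ^ p = 1)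
    (hm : 0 < n + 1) (π : Equiv.Perm (Fin (n + 1)))
    (cf : Fin (n + 1) → ZMod q) (t : ℕ) (α : ZMod p) (x : Fin (n + 1) → ZMod p) :
    omg q ^ aFun p (n + 1) q hm π cf 0 t α.val (fun j => (x (π.symm j)).val) =
      AddChar.zmodChar p hη (α * x 0 + pathPhase n t x) *
        ∏ j, omg q ^ ((cf (π j)).val * (x j).val) := by
  have h1 : aFun p (n + 1) q hm π cf 0 t α.val (fun j => (x (π.symm j)).val) =
      ((q / p * (α.val * (x 0).val + (∑ j : Fin n, (x j.castSucc).val * (x j.succ).val +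
        t * (x (Fin.last n)).val)) + ∑ j, (cf (π j)).val * (x j).val : ℕ) : ℤ) := by
    have h2 : ∑ j, (cf (π j)).val * (x j).val = ∑ j, (cf j).val * (x (π.symm j)).val := by
      rw [← Equiv.sum_comp π fun j => (cf j).val * (x (π.symm j)).val]
      simp
    rw [h2]
    simp only [aFun, fQuad, Equiv.symm_apply_apply, ZMod.val_zero]
    change ((q / p : ℕ) : ℤ) * ∑ j : Fin n, ((x j.castSucc).val : ℤ) * (x j.succ).val + _ +
      ((q / p : ℕ) : ℤ) * α.val * (x 0).val +
      ((q / p : ℕ) : ℤ) * t * (x (Fin.last n)).val + 0 = _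
    push_cast
    ring
  rw [h1, zpow_natCast, pow_add, pow_mul, ← AddChar.zmodChar_apply' hη, prod_pow_eq_pow_sum]
  simp [pathPhase]

theorem sum_block_pairs {A : Type*} [AddCommGroup A] [Module ℂ A] {p m q : ℕ} (hp : p.Prime)
    (hm : 0 < m) (hq : 0 < q) (hd : p ∣ q) (π : Equiv.Perm (Fin m)) (cf : Fin m → ZMod q)
    {t t' : ℕ} (ht : t < p) (ht' : t' < p) (g : ℤ → A) :
    ∑ α ∈ range p, ∑ x ∈ range (p ^ m), ∑ y ∈ range (p ^ m),
      (omg q ^ aFun p m q hm π cf 0 t α (dig p m x) *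
        (starRingEnd ℂ) (omg q ^ aFun p m q hm π cf 0 t' α (dig p m y))) • g ((x : ℤ) - y) =
      if t = t' then (p : ℂ) ^ (m + 1) • g 0 else 0 := by
  have : Fact p.Prime := ⟨hp⟩
  obtain ⟨n, rfl⟩ := Nat.exists_eq_succ_of_ne_zero hm.ne'
  have hη := isPrimitiveRoot_omg_pow hq hd
  have key := sum_pathPhase_pairs (AddChar.zmodChar_primitive_of_primitive_root p hη) n
    (fun j z => omg q ^ ((cf (π j)).val * z.val))
    (fun j z => by simp only [Complex.mul_conj', norm_pow, norm_omg hq, one_pow, Complex.ofReal_one])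
    (fun j z => ((z.val * p ^ (π j : ℕ) : ℕ) : ℤ)) g t t'
  have htt : (t : ZMod p) = t' ↔ t = t' := by
    rw [ZMod.natCast_eq_natCast_iff', Nat.mod_eq_of_lt ht, Nat.mod_eq_of_lt ht']
  have hperm (F : (Fin (n + 1) → ZMod p) → A) : ∑ v, F v = ∑ x : Fin (n + 1) → ZMod p, F fun j => x (π.symm j) :=
    ((π.arrowCongr (Equiv.refl (ZMod p))).sum_comp F).symm
  have hval (x : Fin (n + 1) → ZMod p) : ((∑ j, (x (π.symm j)).val * p ^ (j : ℕ) : ℕ) : ℤ) =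
      ∑ j, (((x j).val * p ^ (π j : ℕ) : ℕ) : ℤ) := by
    rw [← Equiv.sum_comp π fun j => (x (π.symm j)).val * p ^ (j : ℕ)]
    simp
  simp only [htt] at key
  rw [← key, sum_range_zmod_val]
  refine sum_congr rfl fun α _ => ?_
  rw [sum_range_pow_dig p (n + 1) fun v x => ∑ y ∈ range (p ^ (n + 1)),
    (omg q ^ aFun p (n + 1) q hm π cf 0 t α.val v * (starRingEnd ℂ)
      (omg q ^ aFun p (n + 1) q hm π cf 0 t' α.val (dig p (n + 1) y))) • g ((x : ℤ) - y), hperm]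
  refine sum_congr rfl fun x _ => ?_
  rw [sum_range_pow_dig p (n + 1) fun v y =>
    (omg q ^ aFun p (n + 1) q hm π cf 0 t α.val (fun j => (x (π.symm j)).val) * (starRingEnd ℂ)
      (omg q ^ aFun p (n + 1) q hm π cf 0 t' α.val v)) •
      g (((∑ j, (x (π.symm j)).val * p ^ (j : ℕ) : ℕ) : ℤ) - y), hperm]
  refine sum_congr rfl fun y _ => ?_
  rw [omg_zpow_aFun hη.pow_eq_one, omg_zpow_aFun hη.pow_eq_one, hval, hval, ← sum_sub_distrib,
    map_mul, ← AddChar.map_neg_eq_conj, map_prod, mul_mul_mul_comm, ← AddChar.map_add_eq_mul,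
    ← prod_mul_distrib]
  congr 3
  ring

open LaurentPolynomial in
theorem laurentPolynomial_T_sum {ι : Type*} (s : Finset ι) (f : ι → ℤ) :
    (T (∑ i ∈ s, f i) : ℂ[T;T⁻¹]) = ∏ i ∈ s, T (f i) := by
  classical
  induction s using Finset.induction_on with
  | empty => simp
  | insert a s ha ih => rw [sum_insert ha, prod_insert ha, T_add, ih]

open LaurentPolynomial in
theorem codeCorr_eq_coeff (M L : ℕ) (C D : ℕ → ℕ → ℂ) (u : ℤ) :
    codeCorr M L C D u = (∑ ν ∈ range M, ∑ x ∈ range L, ∑ y ∈ range L,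
      (C ν x * (starRingEnd ℂ) (D ν y)) • (T ((x : ℤ) - y) : ℂ[T;T⁻¹])).coeff u := by
  simp [codeCorr, aCorr_eq, AddMonoidAlgebra.coeff_sum, AddMonoidAlgebra.coeff_smul,
    Finsupp.finsetSum_apply]

theorem omg_zpow_sum {ι : Type*} (q : ℕ) (s : Finset ι) (f : ι → ℤ) :
    omg q ^ (∑ i ∈ s, f i) = ∏ i ∈ s, omg q ^ f i := by
  classical
  induction s using Finset.induction_on with
  | empty => simp
  | insert a s ha ih => rw [sum_insert ha, prod_insert ha, zpow_add₀ (show omg q ≠ 0 from Complex.exp_ne_zero _), ih]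

/-- with `K = ∏ p_i` and `L = ∏ p_i^{m_i}`, the family
`{C_{(t_1,…,t_k)} : t_i ∈ {0,…,p_i-1}}` forms a `(K,K,L)`-CCC. -/
theorem statement11 (k : ℕ) (hk : 0 < k) (p m : Fin k → ℕ) (hp : ∀ i, (p i).Prime)
    (hm : ∀ i, 0 < m i) (q : ℕ) (hq : 0 < q) (hdvd : ∀ i, p i ∣ q)
    (π : ∀ i, Equiv.Perm (Fin (m i))) (cf : ∀ i, Fin (m i) → ZMod q)
    (t t' : Fin k → ℕ) (ht : ∀ i, t i < p i) (ht' : ∀ i, t' i < p i)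
    (u : ℤ) (hu : u.natAbs < ∏ i, p i ^ m i) :
    codeCorr (∏ i, p i) (∏ i, p i ^ m i)
        (bigCode k p m hm q π cf t) (bigCode k p m hm q π cf t') u =
      if u = 0 ∧ t = t' then ((∏ i, p i : ℕ) : ℂ) * ((∏ i, p i ^ m i : ℕ) : ℂ)
      else 0 := by
  let W : Fin k → ℤ := fun j => ((∏ l ∈ univ.filter (fun l => j < l), p l ^ m l : ℕ) : ℤ)
  let s (t : Fin k → ℕ) (i : Fin k) (α x : ℕ) : ℂ :=
    omg q ^ aFun (p i) (m i) q (hm i) (π i) (cf i) 0 (t i) α (dig (p i) (m i) x)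
  let G (i : Fin k) (α x y : ℕ) : LaurentPolynomial ℂ :=
    (s t i α x * (starRingEnd ℂ) (s t' i α y)) • LaurentPolynomial.T (W i * ((x : ℤ) - y))
  have hpos (i : Fin k) : 0 < p i ^ m i := pow_pos (hp i).pos _
  have hW {n : ℕ} (hn : n ∈ range (∏ i, p i ^ m i)) :
      (n : ℤ) = ∑ j, W j * blockIdx k (fun j => p j ^ m j) n j := by
    conv_lhs => rw [← Nat.mod_eq_of_lt (mem_range.1 hn), ← sum_blockIdx]
    push_cast
    exact sum_congr rfl fun j _ => by simp [W, mul_comm]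
  have hfactor : ∑ ν ∈ range (∏ i, p i), ∑ x ∈ range (∏ i, p i ^ m i),
      ∑ y ∈ range (∏ i, p i ^ m i), (bigCode k p m hm q π cf t ν x *
        (starRingEnd ℂ) (bigCode k p m hm q π cf t' ν y)) •
          (LaurentPolynomial.T ((x : ℤ) - y) : LaurentPolynomial ℂ) =
      ∏ i, ∑ α ∈ range (p i), ∑ x ∈ range (p i ^ m i), ∑ y ∈ range (p i ^ m i), G i α x y := by
    simp_rw [prod_univ_sum]
    rw [← sum_range_blockIdx k p fun i => (hp i).pos]
    refine sum_congr rfl fun ν _ => ?_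
    rw [← sum_range_blockIdx k _ hpos]
    refine sum_congr rfl fun x hx => ?_
    rw [← sum_range_blockIdx k _ hpos]
    refine sum_congr rfl fun y hy => ?_
    rw [hW hx, hW hy, ← sum_sub_distrib, laurentPolynomial_T_sum]
    simp only [G, s, bigCode, omg_zpow_sum, map_prod, ← prod_mul_distrib, prod_smul, mul_sub]
  have hblock (i : Fin k) : ∑ α ∈ range (p i), ∑ x ∈ range (p i ^ m i),
      ∑ y ∈ range (p i ^ m i), G i α x y =
        LaurentPolynomial.C (if t i = t' i then (p i : ℂ) ^ (m i + 1) else 0) := by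
    rw [sum_block_pairs (hp i) (hm i) hq (hdvd i) (π i) (cf i) (ht i) (ht' i)
      fun d => (LaurentPolynomial.T (W i * d) : LaurentPolynomial ℂ)]
    split_ifs <;> simp [LaurentPolynomial.smul_eq_C_mul]
  rw [codeCorr_eq_coeff, hfactor]
  simp_rw [hblock]
  rw [← map_prod, LaurentPolynomial.C_apply]
  by_cases hu0 : u = 0
  · by_cases htt : t = t'
    · simp [hu0, htt, pow_succ', prod_mul_distrib]
    · obtain ⟨i, hi⟩ := Function.ne_iff.1 htt
      simp only [hu0, htt, and_false, if_true, if_false]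
      exact prod_eq_zero (mem_univ i) (if_neg hi)
  · simp [hu0]
end
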